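/- Let X have GPD(ξ, ψ) distribution with ξ ≠ 0 and support (0, σ), and let c ≥ 0 or c ≤ -σ. The random variable Y = -1/(X + c) has a GPD distribution up to a location shift (i.e., Y - inf(supp Y) is GPD) if and only if c = ψ/ξ. -/

import Mathlib

open MeasureTheory

/-- `Y` has a generalized Pareto distribution with a location parameter:
for some shape `ξ'`, scale `ψ' > 0` and location `μ0`, the excesses
`Y - μ0` have the GPD(ξ', ψ') tail. -/
def IsGPDWithLoc {Ω : Type*} [MeasurableSpace Ω] (μ : Measure Ω)
    (Y : Ω → ℝ) : Prop :=
  ∃ ξ' ψ' μ0 : ℝ, 0 < ψ' ∧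
    ((ξ' = 0 ∧ ∀ x : ℝ, 0 < x →
        μ {ω | Y ω > μ0 + x} = ENNReal.ofReal (Real.exp (-x/ψ'))) ∨
     (ξ' ≠ 0 ∧
        (∀ x : ℝ, 0 < x → (ξ' < 0 → x < ψ'/(-ξ')) →
          μ {ω | Y ω > μ0 + x} = ENNReal.ofReal ((1 + ξ'*x/ψ') ^ (-1/ξ'))) ∧
        (ξ' < 0 → ∀ x : ℝ, ψ'/(-ξ') ≤ x → μ {ω | Y ω > μ0 + x} = 0)))

/-- The logarithm of the GPD(`ξ`, `ψ`) survival function, including the exponential case. -/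
noncomputable def gpdLogSurvival (ξ ψ x : ℝ) : ℝ :=
  if ξ = 0 then -x / ψ else Real.log (1 + ξ * x / ψ) * (-1 / ξ)

lemma gpdLogSurvival_zero (ξ ψ : ℝ) : gpdLogSurvival ξ ψ 0 = 0 := by
  simp [gpdLogSurvival]

lemma one_add_mul_div_pos {ξ ψ x : ℝ} (hψ : 0 < ψ) (hx : 0 < ψ + ξ * x) :
    0 < 1 + ξ * x / ψ := by
  have h : 1 + ξ * x / ψ = (ψ + ξ * x) / ψ := by field_simp
  rw [h]
  exact div_pos hx hψ

lemma hasDerivAt_gpdLogSurvival {ξ ψ x : ℝ} (hψ : 0 < ψ) (hx : 0 < ψ + ξ * x) :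
    HasDerivAt (gpdLogSurvival ξ ψ) (-1 / (ψ + ξ * x)) x := by
  by_cases hξ : ξ = 0
  · subst hξ
    have h : gpdLogSurvival 0 ψ = fun x => -x / ψ := by
      funext y
      simp [gpdLogSurvival]
    rw [h]
    simpa using (hasDerivAt_id x).neg.div_const ψ
  · have h : gpdLogSurvival ξ ψ = fun x => Real.log (1 + ξ * x / ψ) * (-1 / ξ) := by
      funext y
      simp [gpdLogSurvival, hξ]
    rw [h]
    have hpos := one_add_mul_div_pos hψ hx
    have hlin : HasDerivAt (fun x => 1 + ξ * x / ψ) (ξ / ψ) x := by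
      simpa using (((hasDerivAt_id x).const_mul ξ).div_const ψ).const_add 1
    refine ((hlin.log hpos.ne').mul_const (-1 / ξ)).congr_deriv ?_
    have hψ' := hψ.ne'
    have hx' := hx.ne'
    have heq : 1 + ξ * x / ψ = (ψ + ξ * x) / ψ := by field_simp
    rw [heq]
    field_simp

lemma exp_gpdLogSurvival {ξ ψ x : ℝ} (hξ : ξ ≠ 0) (hψ : 0 < ψ) (hx : 0 < ψ + ξ * x) :
    Real.exp (gpdLogSurvival ξ ψ x) = (1 + ξ * x / ψ) ^ (-1 / ξ) := by
  rw [Real.rpow_def_of_pos (one_add_mul_div_pos hψ hx), gpdLogSurvival, if_neg hξ]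

lemma gpdLogSurvival_neg {ξ ψ x : ℝ} (hψ : 0 < ψ) (hx : 0 < x) (hsupp : 0 < ψ + ξ * x) :
    gpdLogSurvival ξ ψ x < 0 := by
  rcases lt_trichotomy ξ 0 with hξ | hξ | hξ
  · rw [gpdLogSurvival, if_neg hξ.ne]
    have h : ξ * x / ψ < 0 := div_neg_of_neg_of_pos (mul_neg_of_neg_of_pos hξ hx) hψ
    exact mul_neg_of_neg_of_pos
      (Real.log_neg (one_add_mul_div_pos hψ hsupp) (by linarith))
      (div_pos_of_neg_of_neg (by norm_num) hξ)
  · rw [gpdLogSurvival, if_pos hξ]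
    exact div_neg_of_neg_of_pos (by linarith) hψ
  · rw [gpdLogSurvival, if_neg hξ.ne']
    have h : 0 < ξ * x / ψ := by positivity
    exact mul_neg_of_pos_of_neg (Real.log_pos (by linarith))
      (div_neg_of_neg_of_pos (by norm_num) hξ)

lemma lt_div_neg_iff_add_mul_pos {ξ ψ x : ℝ} (hξ : ξ < 0) :
    x < ψ / (-ξ) ↔ 0 < ψ + ξ * x := by
  rw [lt_div_iff₀ (neg_pos.2 hξ)]
  constructor <;> intro h <;> linarith

/-- Wherever the survival function of a GPD with location lies strictly between `0` and `1`, it is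
given by `gpdLogSurvival`. -/
lemma IsGPDWithLoc.exists_survival_eq {Ω : Type*} [MeasurableSpace Ω] {μ : Measure Ω}
    [IsProbabilityMeasure μ] {Y : Ω → ℝ} (h : IsGPDWithLoc μ Y) :
    ∃ ξ ψ m : ℝ, 0 < ψ ∧ ∀ y : ℝ, μ {ω | Y ω > y} ≠ 0 → μ {ω | Y ω > y} < 1 →
      0 < ψ + ξ * (y - m) ∧
      μ {ω | Y ω > y} = ENNReal.ofReal (Real.exp (gpdLogSurvival ξ ψ (y - m))) := by
  obtain ⟨ξ, ψ, m, hψ, h⟩ := h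
  have htail : ∀ x : ℝ, 0 < x → 0 < ψ + ξ * x →
      μ {ω | Y ω > m + x} = ENNReal.ofReal (Real.exp (gpdLogSurvival ξ ψ x)) := by
    intro x hx hsupp
    rcases h with ⟨hξ, h⟩ | ⟨hξ, h, -⟩
    · rw [h x hx, gpdLogSurvival, if_pos hξ]
    · rw [exp_gpdLogSurvival hξ hψ hsupp]
      exact h x hx fun hneg => (lt_div_neg_iff_add_mul_pos hneg).2 hsupp
  have hend : ∀ x : ℝ, 0 < x → ψ + ξ * x ≤ 0 → μ {ω | Y ω > m + x} = 0 := by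
    intro x hx hsupp
    have hneg : ξ < 0 := by
      by_contra! hξ
      have := mul_nonneg hξ hx.le
      linarith
    rcases h with ⟨hξ, -⟩ | ⟨-, -, h⟩
    · exact absurd hξ hneg.ne
    · exact h hneg x (not_lt.1 fun hlt =>
        absurd ((lt_div_neg_iff_add_mul_pos hneg).1 hlt) (not_lt.2 hsupp))
  refine ⟨ξ, ψ, m, hψ, fun y hy0 hy1 => ?_⟩
  have hym : m < y := by
    by_contra! hle
    refine absurd hy1 (not_lt.2 ?_)
    have hcont : ContinuousAt (gpdLogSurvival ξ ψ) 0 :=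
      (hasDerivAt_gpdLogSurvival hψ (by simpa using hψ)).continuousAt
    have hlim : Filter.Tendsto (fun x => ENNReal.ofReal (Real.exp (gpdLogSurvival ξ ψ x)))
        (nhdsWithin 0 (Set.Ioi 0)) (nhds 1) := by
      have := (ENNReal.continuous_ofReal.comp Real.continuous_exp).continuousAt.comp hcont
      simpa [ContinuousAt, Function.comp_def, gpdLogSurvival_zero] using
        this.tendsto.mono_left (nhdsWithin_le_nhds (s := Set.Ioi (0 : ℝ)))
    have hsupp : ∀ᶠ x in nhdsWithin (0 : ℝ) (Set.Ioi 0), 0 < ψ + ξ * x := by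
      have hc : ContinuousAt (fun x => ψ + ξ * x) 0 := by fun_prop
      exact nhdsWithin_le_nhds (hc.eventually (lt_mem_nhds (by simpa using hψ)))
    refine le_of_tendsto hlim ?_
    filter_upwards [hsupp, self_mem_nhdsWithin] with x hx hx0
    have hx0 : 0 < x := hx0
    rw [← htail x hx0 hx]
    refine measure_mono fun ω hω => ?_
    simp only [Set.mem_ofPred_eq] at hω ⊢
    linarith
  have hsupp : 0 < ψ + ξ * (y - m) := by
    by_contra! hle
    exact hy0 (by simpa using hend (y - m) (sub_pos.2 hym) hle)
  exact ⟨hsupp, by simpa using htail (y - m) (sub_pos.2 hym) hsupp⟩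

/-- On a common sign domain, `t ↦ -1 / t` is strictly increasing. -/
lemma neg_one_div_lt_neg_one_div_iff {a b : ℝ} (hab : 0 < a * b) :
    -1 / a < -1 / b ↔ a < b := by
  have ha : a ≠ 0 := left_ne_zero_of_mul hab.ne'
  have hb : b ≠ 0 := right_ne_zero_of_mul hab.ne'
  have h : -1 / b - -1 / a = (b - a) / (a * b) := by
    field_simp
    ring
  rw [← sub_pos, h, div_pos_iff_of_pos_right hab, sub_pos]

/-- Theorem 9 (first part): let `X ~ GPD(ξ, ψ)` with `ξ ≠ 0`, support
`(0, σ)` (σ = ∞ for ξ > 0, σ = ψ/|ξ| for ξ < 0), and let `c ≥ 0` or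
`c ≤ -σ`.  Then `Y = -1/(X + c)` has a GPD distribution with a location
parameter if and only if `c = ψ/ξ`. -/
theorem gpd_reciprocal_iff_c {Ω : Type*} [MeasurableSpace Ω]
    (μ : Measure Ω) [IsProbabilityMeasure μ] (X : Ω → ℝ) (hX : Measurable X)
    (ξ ψ c : ℝ) (hξ : ξ ≠ 0) (hψ : 0 < ψ)
    (hc : 0 ≤ c ∨ (ξ < 0 ∧ c ≤ -(ψ/(-ξ))))
    (hpos : ∀ᵐ ω ∂μ, 0 < X ω)
    (hsupp : ξ < 0 → ∀ᵐ ω ∂μ, X ω < ψ/(-ξ))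
    (htail : ∀ x : ℝ, 0 < x → (ξ < 0 → x < ψ / (-ξ)) →
      μ {ω | X ω > x} = ENNReal.ofReal ((1 + ξ * x / ψ) ^ (-1/ξ))) :
    IsGPDWithLoc μ (fun ω => -1/(X ω + c)) ↔ c = ψ/ξ := by
  have hsupp' : ∀ᵐ ω ∂μ, 0 < ψ + ξ * X ω := by
    rcases lt_or_gt_of_ne hξ with hneg | hgt
    · filter_upwards [hsupp hneg] with ω hω using (lt_div_neg_iff_add_mul_pos hneg).1 hω
    · filter_upwards [hpos] with ω hω
      positivity
  have hsign : (∀ x, 0 < x → 0 < ψ + ξ * x → 0 < x + c) ∨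
      (∀ x, 0 < x → 0 < ψ + ξ * x → x + c < 0) := by
    rcases hc with hc | ⟨hneg, hc⟩
    · exact Or.inl fun x hx _ => by linarith
    · exact Or.inr fun x _ hx => by
        have := (lt_div_neg_iff_add_mul_pos hneg).2 hx
        linarith
  have hmul : ∀ x, 0 < x → 0 < ψ + ξ * x → ∀ z, 0 < z → 0 < ψ + ξ * z →
      0 < (x + c) * (z + c) := by
    intro x hx hx' z hz hz'
    rcases hsign with h | h
    · exact mul_pos (h x hx hx') (h z hz hz')
    · exact mul_pos_of_neg_of_neg (h x hx hx') (h z hz hz')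
  have hY : ∀ x, 0 < x → 0 < ψ + ξ * x →
      μ {ω | -1 / (X ω + c) > -1 / (x + c)} =
        ENNReal.ofReal (Real.exp (gpdLogSurvival ξ ψ x)) := by
    intro x hx hx'
    rw [exp_gpdLogSurvival hξ hψ hx',
      ← htail x hx fun hneg => (lt_div_neg_iff_add_mul_pos hneg).2 hx']
    refine measure_congr ?_
    filter_upwards [hpos, hsupp'] with ω hω hω'
    refine propext ((neg_one_div_lt_neg_one_div_iff (hmul x hx hx' _ hω hω')).trans ?_)
    exact add_lt_add_iff_right c
  constructor
  · intro hGPD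
    obtain ⟨ξ', ψ', m, hψ', hsurv⟩ := hGPD.exists_survival_eq
    have hlog : ∀ x, 0 < x → 0 < ψ + ξ * x → 0 < ψ' + ξ' * (-1 / (x + c) - m) ∧
        gpdLogSurvival ξ ψ x = gpdLogSurvival ξ' ψ' (-1 / (x + c) - m) := by
      intro x hx hx'
      obtain ⟨h1, h2⟩ := hsurv (-1 / (x + c))
        (by rw [hY x hx hx']; simp [Real.exp_pos])
        (by rw [hY x hx hx', ENNReal.ofReal_lt_one, Real.exp_lt_one_iff]
            exact gpdLogSurvival_neg hψ hx hx')
      refine ⟨h1, ?_⟩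
      rw [hY x hx hx', ENNReal.ofReal_eq_ofReal_iff (Real.exp_pos _).le (Real.exp_pos _).le] at h2
      exact Real.exp_injective h2
    have hpoly : ∀ x, 0 < x → 0 < ψ + ξ * x →
        (x + c) ^ 2 * (ψ' - ξ' * m) - ξ' * (x + c) = ψ + ξ * x := by
      intro x hx hx'
      have hxc : x + c ≠ 0 := left_ne_zero_of_mul (hmul x hx hx' x hx hx').ne'
      obtain ⟨h1, -⟩ := hlog x hx hx'
      have hinner : HasDerivAt (fun x => -1 / (x + c) - m) (1 / (x + c) ^ 2) x := by
        simpa using (((hasDerivAt_const x (-1 : ℝ)).div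
          ((hasDerivAt_id x).add_const c) hxc).sub_const m)
      have hcomp := (hasDerivAt_gpdLogSurvival hψ' h1).comp x hinner
      have hev : gpdLogSurvival ξ ψ =ᶠ[nhds x]
          (gpdLogSurvival ξ' ψ' ∘ fun x => -1 / (x + c) - m) := by
        have hcont : ContinuousAt (fun x => ψ + ξ * x) x := by fun_prop
        filter_upwards [lt_mem_nhds hx, hcont.eventually (lt_mem_nhds hx')] with z hz hz'
        exact (hlog z hz hz').2
      have hder := (hasDerivAt_gpdLogSurvival hψ hx').unique (hcomp.congr_of_eventuallyEq hev)
      have h1' := h1.ne'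
      have hx'' := hx'.ne'
      have hclear : (x + c) ^ 2 * (ψ' + ξ' * (-1 / (x + c) - m)) = ψ + ξ * x := by
        generalize ψ' + ξ' * (-1 / (x + c) - m) = A at *
        field_simp at hder
        linarith
      rw [← hclear]
      field_simp
      ring
    obtain ⟨t, ht, ht'⟩ : ∃ t : ℝ, 0 < t ∧ ∀ x, x ≤ 3 * t → 0 < x → 0 < ψ + ξ * x := by
      have hξ' : 0 < |ξ| := abs_pos.2 hξ
      refine ⟨ψ / (6 * |ξ|), by positivity, fun x hx hx0 => ?_⟩
      have h1 : |ξ| * x ≤ ψ / 2 := by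
        calc |ξ| * x ≤ |ξ| * (3 * (ψ / (6 * |ξ|))) := by gcongr
          _ = ψ / 2 := by field_simp; norm_num
      have h2 : -(|ξ| * x) ≤ ξ * x := by
        rw [← neg_mul]
        exact mul_le_mul_of_nonneg_right (neg_abs_le ξ) hx0.le
      linarith
    have e1 := hpoly t ht (ht' t (by linarith) ht)
    have e2 := hpoly (2 * t) (by linarith) (ht' _ (by linarith) (by linarith))
    have e3 := hpoly (3 * t) (by linarith) (ht' _ le_rfl (by linarith))
    have hA : ψ' - ξ' * m = 0 := by
      have h : 2 * t ^ 2 * (ψ' - ξ' * m) = 0 := by linear_combination e1 - 2 * e2 + e3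
      exact (mul_eq_zero.1 h).resolve_left (by positivity)
    rw [hA] at e1 e2
    have hξ' : ξ' = -ξ := by
      have h : t * (ξ' + ξ) = 0 := by linear_combination e1 - e2
      linarith [(mul_eq_zero.1 h).resolve_left ht.ne']
    rw [hξ'] at e1
    rw [eq_div_iff hξ]
    linear_combination e1
  · intro hcξ
    have hc' : ξ * c = ψ := by
      rw [hcξ]
      field_simp
    have hψ0 := hψ.ne'
    have hend : ξ ^ 2 / ψ / - -ξ = ξ / ψ := by field_simp
    refine ⟨-ξ, ξ ^ 2 / ψ, -ξ / ψ, by positivity, Or.inr ⟨neg_ne_zero.2 hξ, ?_, ?_⟩⟩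
    · intro z hz hz'
      have hfac : 0 < -(-ξ / ψ + z) * ξ := by
        rcases lt_or_gt_of_ne hξ with hneg | hgt
        · have : 0 < -ξ / ψ + z := add_pos (div_pos (neg_pos.2 hneg) hψ) hz
          nlinarith
        · have h := hz' (neg_neg_of_pos hgt)
          rw [hend] at h
          have : -ξ / ψ + z < 0 := by rw [neg_div]; linarith
          nlinarith
      set y := -ξ / ψ + z with hy
      have hy0 : y ≠ 0 := by
        rintro h
        simp [h] at hfac
      have hzy : z = y + ξ / ψ := by rw [hy]; ring
      have hsup : ψ + ξ * (-1 / y - c) = -ξ / y := by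
        rw [mul_sub, hc']
        ring
      have hsup' : 0 < ψ + ξ * (-1 / y - c) := by
        rw [hsup, show -ξ / y = (-y * ξ) / y ^ 2 by field_simp]
        positivity
      have hx : 0 < -1 / y - c := by
        have h : -1 / y - c = z * ψ ^ 2 / (-y * ξ * ψ) * (1 / ψ) * ψ := by
          rw [hcξ, hzy]
          field_simp
          ring
        rw [h]
        positivity
      have key := hY _ hx hsup'
      rw [sub_add_cancel, show -1 / (-1 / y) = y by field_simp] at key
      rw [key, exp_gpdLogSurvival hξ hψ hsup']
      congr 1
      have hb : 1 + -ξ * z / (ξ ^ 2 / ψ) = (1 + ξ * (-1 / y - c) / ψ)⁻¹ := by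
        have h1 : 1 + ξ * (-1 / y - c) / ψ = (-ξ / y) / ψ := by
          rw [← hsup]
          field_simp
        rw [h1, hzy]
        field_simp
        ring
      rw [hb, Real.inv_rpow (one_add_mul_div_pos hψ hsup').le,
        ← Real.rpow_neg (one_add_mul_div_pos hψ hsup').le]
      congr 1
      field_simp
    · intro hneg z hz
      have hgt : 0 < ξ := by linarith
      rw [hend] at hz
      rw [measure_eq_zero_iff_ae_notMem]
      filter_upwards [hpos] with ω hω hmem
      have hcpos : 0 < c := by rw [hcξ]; positivity
      have hYneg : -1 / (X ω + c) < 0 := div_neg_of_neg_of_pos (by norm_num) (by linarith)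
      have hmem' : -1 / (X ω + c) > -ξ / ψ + z := hmem
      rw [neg_div ψ ξ] at hmem'
      linarith
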